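/- (Correctness of Representation) Suppose that every constructor argument type in the data type declaration is a nominal arity (so the declaration is a nominal signature). Then for any nominal arity ar, any world w and any closed values v, v' with atom(v) ∪ atom(v') ⊆ w, ∅ ⊢ v : ar and ∅ ⊢ v' : ar, one has ⊢_w v =α v' : ar if and only if ⊢_w v ≅ v' : ar. -/

import Mathlib

/-!
Over a nominal signature, the closed values of nominal arity are the ground ones (`Ground`): no
variables, no functions, binding pairs that bind an atom. The two directions use different ideas.

*α-equivalence implies operational equivalence.* Let `Cong σ w` be the congruence on all terms,
open or closed, generated by α-equivalence of ground binding pairs. It contains α-equivalence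
(`AlphaEq.cong`), is equivariant under permutations of atoms, and is closed under substitution
because the α-converted pairs are closed. Extended to configurations with *the same* state, it is a
simulation (`CongConf.step`): a transition on one side is matched by the same transition on the
other, making the same choice of fresh atom. The only case in which α-conversion is visible is
`unbind`, where the two bodies, renamed to a common fresh atom, are again congruent. Congruent terms
agree on free atoms, so observations are made of the same atoms in the same state and return equal
numbers. As `Cong` is symmetric, congruent configurations have the same termination behaviour.

*Operational equivalence implies α-equivalence.* For a ground value `v` there is an expression
`test v ρ t` which, by recursion on `v`, takes the value `t` apart and compares atoms with `eq`,
diverging at the first mismatch. Below a binding pair of `v` the bound atom is interpreted by the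
variable holding the atom generated by unbinding the matching pair of `t`, so one value is tested
against a fixed pattern and no two generated atoms have to be identified. The value `v` passes its
own test (`test_complete`), and only α-equivalent values do (`test_sound`). Running the test as a
frame in a state whose atoms are exactly `w` gives the claim.
-/

set_option autoImplicit true

/-! ## Atoms and variables -/

abbrev Atom : Type := ℕ

/-! ## Types over a set of data type symbols -/

inductive Ty (D : Type) : Type where
  | unit : Ty D
  | prod : Ty D → Ty D → Ty D
  | arrow : Ty D → Ty D → Ty D
  | data : D → Ty D
  | atm : Ty D
  | bnd : Ty D → Ty D

/-! ## Signatures: data types, constructors and observations -/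

structure Sig : Type 1 where
  D : Type
  C : Type
  O : Type
  [finD : Fintype D]
  [finC : Fintype C]
  [finO : Fintype O]
  natD : D
  argTy : C → Ty D
  resTy : C → D
  zeroC : C
  succC : C
  zeroArg : argTy zeroC = Ty.unit
  zeroRes : resTy zeroC = natD
  succArg : argTy succC = Ty.data natD
  succRes : resTy succC = natD
  arity : O → ℕ
  obsVal : O → List Atom → List Atom → ℕ
  eqO : O
  eqArity : arity eqO = 2
  eqSem : ∀ (s : List Atom) (a b : Atom),
    obsVal eqO s [a, b] = if a = b then 0 else 1

attribute [instance] Sig.finD Sig.finC Sig.finO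

/-! ## Terms (de Bruijn representation; values are a sub-grammar cut out by `IsVal`) -/

inductive Tm (σ : Sig) : Type where
  | var : ℕ → Tm σ
  | unit : Tm σ
  | pair : Tm σ → Tm σ → Tm σ
  | fn : Tm σ → Tm σ          -- fun(f x = e); de Bruijn: var 0 = x, var 1 = f
  | con : σ.C → Tm σ → Tm σ
  | atom : Atom → Tm σ
  | bindv : Tm σ → Tm σ → Tm σ -- atom binding ⟨⟨v₁⟩⟩v₂
  | lett : Tm σ → Tm σ → Tm σ  -- let x = e₁ in e₂; binds var 0 in e₂
  | fst : Tm σ → Tm σ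
  | snd : Tm σ → Tm σ
  | app : Tm σ → Tm σ → Tm σ
  | case : Tm σ → (σ.C → Tm σ) → Tm σ -- match; each branch binds var 0
  | fresh : Tm σ
  | unbind : Tm σ → Tm σ
  | obs : (o : σ.O) → (Fin (σ.arity o) → Tm σ) → Tm σ

inductive IsVal {σ : Sig} : Tm σ → Prop where
  | var : IsVal (Tm.var n)
  | unit : IsVal Tm.unit
  | pair : IsVal v₁ → IsVal v₂ → IsVal (Tm.pair v₁ v₂)
  | fn : IsVal (Tm.fn e)
  | con : IsVal v → IsVal (Tm.con c v)
  | atom : IsVal (Tm.atom a)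
  | bindv : IsVal v₁ → IsVal v₂ → IsVal (Tm.bindv v₁ v₂)

/-! ## Renaming and substitution of variables -/

def upr (r : ℕ → ℕ) : ℕ → ℕ
  | 0 => 0
  | n + 1 => r n + 1

namespace Tm

variable {σ : Sig}

def renV : Tm σ → (ℕ → ℕ) → Tm σ
  | .var n, r => .var (r n)
  | .unit, _ => .unit
  | .pair t₁ t₂, r => .pair (renV t₁ r) (renV t₂ r)
  | .fn e, r => .fn (renV e (upr (upr r)))
  | .con c t, r => .con c (renV t r)
  | .atom a, _ => .atom a
  | .bindv t₁ t₂, r => .bindv (renV t₁ r) (renV t₂ r)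
  | .lett e₁ e₂, r => .lett (renV e₁ r) (renV e₂ (upr r))
  | .fst t, r => .fst (renV t r)
  | .snd t, r => .snd (renV t r)
  | .app t₁ t₂, r => .app (renV t₁ r) (renV t₂ r)
  | .case t br, r => .case (renV t r) (fun c => renV (br c) (upr r))
  | .fresh, _ => .fresh
  | .unbind t, r => .unbind (renV t r)
  | .obs o args, r => .obs o (fun i => renV (args i) r)

def ups (ρ : ℕ → Tm σ) : ℕ → Tm σ
  | 0 => .var 0
  | n + 1 => renV (ρ n) Nat.succ

def subst : Tm σ → (ℕ → Tm σ) → Tm σ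
  | .var n, ρ => ρ n
  | .unit, _ => .unit
  | .pair t₁ t₂, ρ => .pair (subst t₁ ρ) (subst t₂ ρ)
  | .fn e, ρ => .fn (subst e (ups (ups ρ)))
  | .con c t, ρ => .con c (subst t ρ)
  | .atom a, _ => .atom a
  | .bindv t₁ t₂, ρ => .bindv (subst t₁ ρ) (subst t₂ ρ)
  | .lett e₁ e₂, ρ => .lett (subst e₁ ρ) (subst e₂ (ups ρ))
  | .fst t, ρ => .fst (subst t ρ)
  | .snd t, ρ => .snd (subst t ρ)
  | .app t₁ t₂, ρ => .app (subst t₁ ρ) (subst t₂ ρ)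
  | .case t br, ρ => .case (subst t ρ) (fun c => subst (br c) (ups ρ))
  | .fresh, _ => .fresh
  | .unbind t, ρ => .unbind (subst t ρ)
  | .obs o args, ρ => .obs o (fun i => subst (args i) ρ)

/-- The substitution [v/x₀]. -/
def cons1 (v : Tm σ) : ℕ → Tm σ
  | 0 => v
  | n + 1 => .var n

/-- The substitution [v/x₀, f/x₁]. -/
def cons2 (v f : Tm σ) : ℕ → Tm σ
  | 0 => v
  | 1 => f
  | n + 2 => .var n

/-- e[v/x] (single capture-avoiding substitution for the last-bound variable). -/
def subst1 (e v : Tm σ) : Tm σ := subst e (cons1 v)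

/-- e[v/x, f/f'] (used for function application). -/
def subst2 (e v f : Tm σ) : Tm σ := subst e (cons2 v f)

/-! ## Atoms of a term, renaming/permuting atoms, observation symbols -/

def atoms : Tm σ → Finset Atom
  | .var _ => ∅
  | .unit => ∅
  | .pair t₁ t₂ => atoms t₁ ∪ atoms t₂
  | .fn e => atoms e
  | .con _ t => atoms t
  | .atom a => {a}
  | .bindv t₁ t₂ => atoms t₁ ∪ atoms t₂
  | .lett e₁ e₂ => atoms e₁ ∪ atoms e₂
  | .fst t => atoms t
  | .snd t => atoms t
  | .app t₁ t₂ => atoms t₁ ∪ atoms t₂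
  | .case t br => atoms t ∪ Finset.univ.biUnion (fun c => atoms (br c))
  | .fresh => ∅
  | .unbind t => atoms t
  | .obs _ args => Finset.univ.biUnion (fun i => atoms (args i))

def mapAtoms : Tm σ → (Atom → Atom) → Tm σ
  | .var n, _ => .var n
  | .unit, _ => .unit
  | .pair t₁ t₂, f => .pair (mapAtoms t₁ f) (mapAtoms t₂ f)
  | .fn e, f => .fn (mapAtoms e f)
  | .con c t, f => .con c (mapAtoms t f)
  | .atom a, f => .atom (f a)
  | .bindv t₁ t₂, f => .bindv (mapAtoms t₁ f) (mapAtoms t₂ f)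
  | .lett e₁ e₂, f => .lett (mapAtoms e₁ f) (mapAtoms e₂ f)
  | .fst t, f => .fst (mapAtoms t f)
  | .snd t, f => .snd (mapAtoms t f)
  | .app t₁ t₂, f => .app (mapAtoms t₁ f) (mapAtoms t₂ f)
  | .case t br, f => .case (mapAtoms t f) (fun c => mapAtoms (br c) f)
  | .fresh, _ => .fresh
  | .unbind t, f => .unbind (mapAtoms t f)
  | .obs o args, f => .obs o (fun i => mapAtoms (args i) f)

/-- v[a := a'] : rename all occurrences of atom a to a'. -/
def renameAtom (t : Tm σ) (a a' : Atom) : Tm σ :=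
  t.mapAtoms (fun b => if b = a then a' else b)

def obsSyms : Tm σ → Set σ.O
  | .var _ => ∅
  | .unit => ∅
  | .pair t₁ t₂ => obsSyms t₁ ∪ obsSyms t₂
  | .fn e => obsSyms e
  | .con _ t => obsSyms t
  | .atom _ => ∅
  | .bindv t₁ t₂ => obsSyms t₁ ∪ obsSyms t₂
  | .lett e₁ e₂ => obsSyms e₁ ∪ obsSyms e₂
  | .fst t => obsSyms t
  | .snd t => obsSyms t
  | .app t₁ t₂ => obsSyms t₁ ∪ obsSyms t₂
  | .case t br => obsSyms t ∪ ⋃ c, obsSyms (br c)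
  | .fresh => ∅
  | .unbind t => obsSyms t
  | .obs o args => insert o (⋃ i, obsSyms (args i))

end Tm

/-! ## Frame stacks -/

inductive Stk (σ : Sig) : Type where
  | id : Stk σ
  | cons : Stk σ → Tm σ → Stk σ  -- S∘(x.e); e binds var 0

namespace Stk

variable {σ : Sig}

def atoms : Stk σ → Finset Atom
  | .id => ∅
  | .cons S e => atoms S ∪ e.atoms

def obsSyms : Stk σ → Set σ.O
  | .id => ∅
  | .cons S e => obsSyms S ∪ e.obsSyms

def mapAtoms : Stk σ → (Atom → Atom) → Stk σ
  | .id, _ => .id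
  | .cons S e, f => .cons (mapAtoms S f) (e.mapAtoms f)

/-- S[e]: Id[e] = e, (S∘(x.e'))[e] = S[let x = e in e']. -/
def fill : Stk σ → Tm σ → Tm σ
  | .id, e => e
  | .cons S e', e => fill S (Tm.lett e e')

end Stk

/-! ## Numerals -/

def numeral (σ : Sig) : ℕ → Tm σ
  | 0 => Tm.con σ.zeroC Tm.unit
  | n + 1 => Tm.con σ.succC (numeral σ n)

/-! ## Configurations -/

structure Config (σ : Sig) : Type where
  st : List Atom
  stk : Stk σ
  tm : Tm σ

/-! ## Typing -/

inductive HasTy (σ : Sig) : List (Ty σ.D) → Tm σ → Ty σ.D → Prop where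
  | var (Γ : List (Ty σ.D)) (n : ℕ) (τ : Ty σ.D) :
      Γ[n]? = some τ → HasTy σ Γ (Tm.var n) τ
  | unit : HasTy σ Γ Tm.unit Ty.unit
  | pair : IsVal v₁ → IsVal v₂ → HasTy σ Γ v₁ τ₁ → HasTy σ Γ v₂ τ₂ →
      HasTy σ Γ (Tm.pair v₁ v₂) (Ty.prod τ₁ τ₂)
  | fn : HasTy σ (τ :: Ty.arrow τ τ' :: Γ) e τ' →
      HasTy σ Γ (Tm.fn e) (Ty.arrow τ τ')
  | con : IsVal v → HasTy σ Γ v (σ.argTy c) →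
      HasTy σ Γ (Tm.con c v) (Ty.data (σ.resTy c))
  | atom : HasTy σ Γ (Tm.atom a) Ty.atm
  | bindv : IsVal v₁ → IsVal v₂ → HasTy σ Γ v₁ Ty.atm → HasTy σ Γ v₂ τ →
      HasTy σ Γ (Tm.bindv v₁ v₂) (Ty.bnd τ)
  | lett : HasTy σ Γ e₁ τ → HasTy σ (τ :: Γ) e₂ τ' →
      HasTy σ Γ (Tm.lett e₁ e₂) τ'
  | fst : IsVal v → HasTy σ Γ v (Ty.prod τ₁ τ₂) → HasTy σ Γ (Tm.fst v) τ₁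
  | snd : IsVal v → HasTy σ Γ v (Ty.prod τ₁ τ₂) → HasTy σ Γ (Tm.snd v) τ₂
  | app : IsVal v₁ → IsVal v₂ → HasTy σ Γ v₁ (Ty.arrow τ τ') → HasTy σ Γ v₂ τ →
      HasTy σ Γ (Tm.app v₁ v₂) τ'
  | case (br : σ.C → Tm σ) : IsVal v → HasTy σ Γ v (Ty.data δ) →
      (∀ c, σ.resTy c = δ → HasTy σ (σ.argTy c :: Γ) (br c) τ) →
      HasTy σ Γ (Tm.case v br) τ
  | fresh : HasTy σ Γ Tm.fresh Ty.atm
  | unbind : IsVal v → HasTy σ Γ v (Ty.bnd τ) →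
      HasTy σ Γ (Tm.unbind v) (Ty.prod Ty.atm τ)
  | obs (o : σ.O) (args : Fin (σ.arity o) → Tm σ) :
      (∀ i, IsVal (args i)) → (∀ i, HasTy σ Γ (args i) Ty.atm) →
      HasTy σ Γ (Tm.obs o args) (Ty.data σ.natD)

inductive HasTyStk (σ : Sig) : List (Ty σ.D) → Stk σ → Ty σ.D → Ty σ.D → Prop where
  | id : HasTyStk σ Γ Stk.id τ τ
  | cons : HasTy σ (τ :: Γ) e τ' → HasTyStk σ Γ S τ' τ'' →
      HasTyStk σ Γ (Stk.cons S e) τ τ''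

/-! ## The transition relation -/

inductive Step (σ : Sig) : Config σ → Config σ → Prop where
  | pop : IsVal v →
      Step σ ⟨s, Stk.cons S e, v⟩ ⟨s, S, e.subst1 v⟩
  | lett :
      Step σ ⟨s, S, Tm.lett e₁ e₂⟩ ⟨s, Stk.cons S e₂, e₁⟩
  | case (br : σ.C → Tm σ) : IsVal v →
      Step σ ⟨s, S, Tm.case (Tm.con c v) br⟩ ⟨s, S, (br c).subst1 v⟩
  | fst : IsVal v₁ → IsVal v₂ →
      Step σ ⟨s, S, Tm.fst (Tm.pair v₁ v₂)⟩ ⟨s, S, v₁⟩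
  | snd : IsVal v₁ → IsVal v₂ →
      Step σ ⟨s, S, Tm.snd (Tm.pair v₁ v₂)⟩ ⟨s, S, v₂⟩
  | app : IsVal v →
      Step σ ⟨s, S, Tm.app (Tm.fn e) v⟩ ⟨s, S, e.subst2 v (Tm.fn e)⟩
  | fresh : a' ∉ s →
      Step σ ⟨s, S, Tm.fresh⟩ ⟨s ++ [a'], S, Tm.atom a'⟩
  | unbind : a' ∉ s → IsVal v →
      Step σ ⟨s, S, Tm.unbind (Tm.bindv (Tm.atom a) v)⟩
             ⟨s ++ [a'], S, Tm.pair (Tm.atom a') (v.renameAtom a a')⟩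
  | obs (o : σ.O) (as : Fin (σ.arity o) → Atom) :
      (∀ i, as i ∈ s) →
      Step σ ⟨s, S, Tm.obs o (fun i => Tm.atom (as i))⟩
             ⟨s, S, numeral σ (σ.obsVal o s (List.ofFn as))⟩

/-! ## Termination -/

inductive TermN (σ : Sig) : Config σ → ℕ → Prop where
  | val : IsVal v → TermN σ ⟨s, Stk.id, v⟩ 0
  | step : Step σ c c' → TermN σ c' n → TermN σ c (n + 1)

def Term (σ : Sig) (c : Config σ) : Prop := ∃ n, TermN σ c n

/-! ## Equivariance and affineness of observations -/

def ObsEquivariant (σ : Sig) : Prop :=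
  ∀ (π : Equiv.Perm Atom), {a : Atom | π a ≠ a}.Finite →
    ∀ (o : σ.O) (s as : List Atom),
      s.Nodup → as.length = σ.arity o → (∀ a ∈ as, a ∈ s) →
      σ.obsVal o s as = σ.obsVal o (s.map ⇑π) (as.map ⇑π)

def AffineObs (σ : Sig) (o : σ.O) : Prop :=
  ∀ (s : List Atom) (a' : Atom) (as : List Atom),
    s.Nodup → a' ∉ s → as.length = σ.arity o → (∀ a ∈ as, a ∈ s) →
    σ.obsVal o (a' :: s) as = σ.obsVal o s as

/-! ## Operational equivalence of closed expressions, and contextual equivalence -/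

def OpEq (σ : Sig) (w : Finset Atom) (e e' : Tm σ) (τ : Ty σ.D) : Prop :=
  e.atoms ∪ e'.atoms ⊆ w ∧ HasTy σ [] e τ ∧ HasTy σ [] e' τ ∧
  ∀ (s : List Atom) (S : Stk σ) (τ' : Ty σ.D),
    s.Nodup → w ∪ S.atoms ⊆ s.toFinset → HasTyStk σ [] S τ τ' →
    (Term σ ⟨s, S, e⟩ ↔ Term σ ⟨s, S, e'⟩)

/-- A closing substitution for context Γ with atoms in w. -/
def ClosingSubst (σ : Sig) (Γ : List (Ty σ.D)) (w : Finset Atom) (vs : ℕ → Tm σ) : Prop :=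
  ∀ i τ, Γ[i]? = some τ → IsVal (vs i) ∧ HasTy σ [] (vs i) τ ∧ (vs i).atoms ⊆ w

def CtxEq (σ : Sig) (Γ : List (Ty σ.D)) (w : Finset Atom) (e e' : Tm σ) (τ : Ty σ.D) : Prop :=
  e.atoms ∪ e'.atoms ⊆ w ∧ HasTy σ Γ e τ ∧ HasTy σ Γ e' τ ∧
  ∀ (w' : Finset Atom) (vs : ℕ → Tm σ), w ⊆ w' → ClosingSubst σ Γ w' vs →
    OpEq σ w' (e.subst vs) (e'.subst vs) τ

/-! ## Expression relations -/

def ExprRel (σ : Sig) : Type :=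
  List (Ty σ.D) → Finset Atom → Tm σ → Tm σ → Ty σ.D → Prop

def IsExprRel (σ : Sig) (R : ExprRel σ) : Prop :=
  ∀ Γ w e e' τ, R Γ w e e' τ →
    e.atoms ∪ e'.atoms ⊆ w ∧ HasTy σ Γ e τ ∧ HasTy σ Γ e' τ

/-- Compatible refinement ℰ̂ of an expression relation ℰ. -/
inductive CompRef (σ : Sig) (R : ExprRel σ) :
    List (Ty σ.D) → Finset Atom → Tm σ → Tm σ → Ty σ.D → Prop where
  | var (Γ : List (Ty σ.D)) (n : ℕ) (τ : Ty σ.D) :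
      Γ[n]? = some τ → CompRef σ R Γ w (Tm.var n) (Tm.var n) τ
  | unit : CompRef σ R Γ w Tm.unit Tm.unit Ty.unit
  | pair : IsVal v₁ → IsVal v₂ → IsVal v₁' → IsVal v₂' →
      R Γ w v₁ v₁' τ₁ → R Γ w v₂ v₂' τ₂ →
      CompRef σ R Γ w (Tm.pair v₁ v₂) (Tm.pair v₁' v₂') (Ty.prod τ₁ τ₂)
  | fn : R (τ :: Ty.arrow τ τ' :: Γ) w e e' τ' →
      CompRef σ R Γ w (Tm.fn e) (Tm.fn e') (Ty.arrow τ τ')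
  | con : IsVal v → IsVal v' → R Γ w v v' (σ.argTy c) →
      CompRef σ R Γ w (Tm.con c v) (Tm.con c v') (Ty.data (σ.resTy c))
  | atom : a ∈ w → CompRef σ R Γ w (Tm.atom a) (Tm.atom a) Ty.atm
  | bindv : IsVal v₁ → IsVal v₂ → IsVal v₁' → IsVal v₂' →
      R Γ w v₁ v₁' Ty.atm → R Γ w v₂ v₂' τ →
      CompRef σ R Γ w (Tm.bindv v₁ v₂) (Tm.bindv v₁' v₂') (Ty.bnd τ)
  | lett : R Γ w e₁ e₁' τ → R (τ :: Γ) w e₂ e₂' τ' →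
      CompRef σ R Γ w (Tm.lett e₁ e₂) (Tm.lett e₁' e₂') τ'
  | fst : IsVal v → IsVal v' → R Γ w v v' (Ty.prod τ₁ τ₂) →
      CompRef σ R Γ w (Tm.fst v) (Tm.fst v') τ₁
  | snd : IsVal v → IsVal v' → R Γ w v v' (Ty.prod τ₁ τ₂) →
      CompRef σ R Γ w (Tm.snd v) (Tm.snd v') τ₂
  | app : IsVal v₁ → IsVal v₂ → IsVal v₁' → IsVal v₂' →
      R Γ w v₁ v₁' (Ty.arrow τ τ') → R Γ w v₂ v₂' τ →
      CompRef σ R Γ w (Tm.app v₁ v₂) (Tm.app v₁' v₂') τ'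
  | case (br br' : σ.C → Tm σ) : IsVal v → IsVal v' → R Γ w v v' (Ty.data δ) →
      (∀ c, σ.resTy c = δ → R (σ.argTy c :: Γ) w (br c) (br' c) τ) →
      CompRef σ R Γ w (Tm.case v br) (Tm.case v' br') τ
  | fresh : CompRef σ R Γ w Tm.fresh Tm.fresh Ty.atm
  | unbind : IsVal v → IsVal v' → R Γ w v v' (Ty.bnd τ) →
      CompRef σ R Γ w (Tm.unbind v) (Tm.unbind v') (Ty.prod Ty.atm τ)
  | obs (o : σ.O) (args args' : Fin (σ.arity o) → Tm σ) :
      (∀ i, IsVal (args i)) → (∀ i, IsVal (args' i)) →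
      (∀ i, R Γ w (args i) (args' i) Ty.atm) →
      CompRef σ R Γ w (Tm.obs o args) (Tm.obs o args') (Ty.data σ.natD)

/-- Compatible refinement extended to frame stacks. -/
inductive StkRef (σ : Sig) (R : ExprRel σ) :
    List (Ty σ.D) → Finset Atom → Stk σ → Stk σ → Ty σ.D → Ty σ.D → Prop where
  | id : StkRef σ R Γ w Stk.id Stk.id τ τ
  | cons : R (τ :: Γ) w e e' τ' → StkRef σ R Γ w S S' τ' τ'' →
      StkRef σ R Γ w (Stk.cons S e) (Stk.cons S' e') τ τ''

/-! ## Properties of expression relations -/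

def RelRefl (σ : Sig) (R : ExprRel σ) : Prop :=
  ∀ Γ w (e : Tm σ) τ, e.atoms ⊆ w → HasTy σ Γ e τ → R Γ w e e τ

def RelSymm (σ : Sig) (R : ExprRel σ) : Prop :=
  ∀ Γ w e e' τ, R Γ w e e' τ → R Γ w e' e τ

def RelTrans (σ : Sig) (R : ExprRel σ) : Prop :=
  ∀ Γ w e e' e'' τ, R Γ w e e' τ → R Γ w e' e'' τ → R Γ w e e'' τ

def RelCompat (σ : Sig) (R : ExprRel σ) : Prop :=
  ∀ Γ w e e' τ, CompRef σ R Γ w e e' τ → R Γ w e e' τ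

def RelSubst (σ : Sig) (R : ExprRel σ) : Prop :=
  ∀ Γ w (v v' : Tm σ) τ e e' τ', IsVal v → IsVal v' →
    R Γ w v v' τ → R (τ :: Γ) w e e' τ' →
    R Γ w (e.subst1 v) (e'.subst1 v') τ'

def RelEquivariant (σ : Sig) (R : ExprRel σ) : Prop :=
  ∀ (π : Equiv.Perm Atom), {a : Atom | π a ≠ a}.Finite →
    ∀ Γ w (e e' : Tm σ) τ, R Γ w e e' τ →
      R Γ (w.image ⇑π) (e.mapAtoms ⇑π) (e'.mapAtoms ⇑π) τ

def RelAdequate (σ : Sig) (R : ExprRel σ) : Prop :=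
  ∀ w e e' τ, R [] w e e' τ → OpEq σ w e e' τ

/-! ## The Howe relation (least relation closed under the Howe rule) -/

def Howe (σ : Sig) : ExprRel σ := fun Γ w e e'' τ =>
  ∀ R : ExprRel σ,
    (∀ Γ' w' a c τ',
      (∃ b, CompRef σ R Γ' w' a b τ' ∧ CtxEq σ Γ' w' b c τ') → R Γ' w' a c τ') →
    R Γ w e e'' τ

/-! ## Nominal arities and α-equivalence -/

inductive NominalArity (σ : Sig) : Ty σ.D → Prop where
  | unit : NominalArity σ Ty.unit
  | prod : NominalArity σ t₁ → NominalArity σ t₂ → NominalArity σ (Ty.prod t₁ t₂)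
  | data (d : σ.D) : NominalArity σ (Ty.data d)
  | atm : NominalArity σ Ty.atm
  | bnd : NominalArity σ t → NominalArity σ (Ty.bnd t)

inductive AlphaEq (σ : Sig) : Finset Atom → Tm σ → Tm σ → Ty σ.D → Prop where
  | unit : AlphaEq σ w Tm.unit Tm.unit Ty.unit
  | pair : AlphaEq σ w v₁ v₁' a₁ → AlphaEq σ w v₂ v₂' a₂ →
      AlphaEq σ w (Tm.pair v₁ v₂) (Tm.pair v₁' v₂') (Ty.prod a₁ a₂)
  | con : AlphaEq σ w v v' (σ.argTy c) →
      AlphaEq σ w (Tm.con c v) (Tm.con c v') (Ty.data (σ.resTy c))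
  | atom : a ∈ w → AlphaEq σ w (Tm.atom a) (Tm.atom a) Ty.atm
  | bindv (a a' a'' : Atom) (v v' : Tm σ) : a'' ∉ w →
      insert a (insert a' (v.atoms ∪ v'.atoms)) ⊆ w →
      AlphaEq σ (insert a'' w) (v.renameAtom a a'') (v'.renameAtom a' a'') ar →
      AlphaEq σ w (Tm.bindv (Tm.atom a) v) (Tm.bindv (Tm.atom a') v') (Ty.bnd ar)

/-! ## Well-typed configurations -/

def ConfigTy (σ : Sig) (w : Finset Atom) (c : Config σ) (τ : Ty σ.D) : Prop :=
  c.st.Nodup ∧ c.stk.atoms ∪ c.tm.atoms ⊆ c.st.toFinset ∧ c.st.toFinset = w ∧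
  ∃ τ', HasTyStk σ [] c.stk τ' τ ∧ HasTy σ [] c.tm τ'

/-! ### Ground values -/

/-- The closed first-order values: those containing no variables and no functions, and whose
binding pairs bind an atom. These are the values of nominal arity. -/
inductive Ground {σ : Sig} : Tm σ → Prop where
  | unit : Ground Tm.unit
  | pair : Ground v₁ → Ground v₂ → Ground (Tm.pair v₁ v₂)
  | con : Ground v → Ground (Tm.con c v)
  | atom : Ground (Tm.atom a)
  | bindv : Ground v → Ground (Tm.bindv (Tm.atom a) v)

section GroundLemmas

variable {σ : Sig}

theorem Ground.isVal {v : Tm σ} (h : Ground v) : IsVal v := by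
  induction h <;> constructor <;> first | assumption | constructor

theorem Ground.renV {v : Tm σ} (h : Ground v) (r : ℕ → ℕ) : v.renV r = v := by
  induction h <;> simp_all [Tm.renV]

theorem Ground.subst {v : Tm σ} (h : Ground v) (ρ : ℕ → Tm σ) : v.subst ρ = v := by
  induction h <;> simp_all [Tm.subst]

theorem Ground.mapAtoms {v : Tm σ} (h : Ground v) (f : Atom → Atom) :
    Ground (v.mapAtoms f) := by
  induction h <;> simp only [Tm.mapAtoms] <;> constructor <;> assumption

theorem Ground.of_mapAtoms {f : Atom → Atom} {v : Tm σ} (h : Ground (v.mapAtoms f)) :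
    Ground v := by
  induction v with
  | bindv t₁ t₂ ih₁ ih₂ =>
    cases t₁ <;> simp only [Tm.mapAtoms] at h <;> cases h
    exact .bindv (ih₂ (by assumption))
  | unit => exact .unit
  | atom => exact .atom
  | pair _ _ ih₁ ih₂ =>
    simp only [Tm.mapAtoms] at h
    cases h with
    | pair h₁ h₂ => exact .pair (ih₁ h₁) (ih₂ h₂)
  | con _ _ ih =>
    simp only [Tm.mapAtoms] at h
    cases h with
    | con h => exact .con (ih h)
  | _ => simp only [Tm.mapAtoms] at h; cases h

theorem Ground.mapAtoms_hasTy {v : Tm σ} (h : Ground v) {τ : Ty σ.D} (f : Atom → Atom)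
    (ht : HasTy σ [] v τ) : HasTy σ [] (v.mapAtoms f) τ := by
  induction h generalizing τ with
  | unit => exact ht
  | pair h₁ h₂ ih₁ ih₂ =>
    cases ht with
    | pair _ _ t₁ t₂ =>
      exact .pair (h₁.mapAtoms f).isVal (h₂.mapAtoms f).isVal (ih₁ t₁) (ih₂ t₂)
  | con h ih =>
    cases ht with
    | con _ t => exact .con (h.mapAtoms f).isVal (ih t)
  | atom => cases ht; exact .atom
  | bindv h ih =>
    cases ht with
    | bindv _ _ _ t => exact .bindv .atom (h.mapAtoms f).isVal .atom (ih t)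

/-- Over a nominal signature the closed values of nominal arity are first-order. -/
theorem ground_of_hasTy (hnom : ∀ c : σ.C, NominalArity σ (σ.argTy c)) {v : Tm σ}
    (hv : IsVal v) {ar : Ty σ.D} (har : NominalArity σ ar) (ht : HasTy σ [] v ar) :
    Ground v := by
  induction hv generalizing ar with
  | var => cases ht; simp_all
  | unit => exact .unit
  | atom => exact .atom
  | fn => cases ht; cases har
  | pair _ _ ih₁ ih₂ =>
    cases ht with
    | pair _ _ t₁ t₂ =>
      cases har with
      | prod n₁ n₂ => exact .pair (ih₁ n₁ t₁) (ih₂ n₂ t₂)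
  | con _ ih =>
    cases ht with
    | con _ t => exact .con (ih (hnom _) t)
  | bindv h₁ _ ih₁ ih₂ =>
    cases ht with
    | bindv _ _ t₁ t₂ =>
      cases har with
      | bnd n =>
        cases h₁ with
        | atom => exact .bindv (ih₂ n t₂)
        | var => cases t₁; simp_all
        | _ => cases t₁

end GroundLemmas

/-! ### Renaming of atoms -/

section AtomLemmas

variable {σ : Sig}

theorem mapAtoms_comp (t : Tm σ) (f g : Atom → Atom) :
    (t.mapAtoms f).mapAtoms g = t.mapAtoms (g ∘ f) := by
  induction t <;> simp_all [Tm.mapAtoms]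

theorem mapAtoms_congr (t : Tm σ) {f g : Atom → Atom} (h : ∀ a ∈ t.atoms, f a = g a) :
    t.mapAtoms f = t.mapAtoms g := by
  induction t with
  | case t br ih₁ ih₂ =>
    simp only [Tm.atoms, Finset.mem_union, Finset.mem_biUnion, Finset.mem_univ, true_and] at h
    simp only [Tm.mapAtoms, Tm.case.injEq]
    exact ⟨ih₁ fun a ha => h a (.inl ha),
      funext fun c => ih₂ c fun a ha => h a (.inr ⟨c, ha⟩)⟩
  | obs o args ih =>
    simp only [Tm.atoms, Finset.mem_biUnion, Finset.mem_univ, true_and] at h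
    simp only [Tm.mapAtoms, Tm.obs.injEq, heq_eq_eq, true_and]
    exact funext fun i => ih i fun a ha => h a ⟨i, ha⟩
  | _ => simp_all [Tm.mapAtoms, Tm.atoms]

theorem mapAtoms_id (t : Tm σ) : t.mapAtoms id = t := by
  induction t <;> simp_all [Tm.mapAtoms]

theorem atoms_mapAtoms (t : Tm σ) (f : Atom → Atom) :
    (t.mapAtoms f).atoms = t.atoms.image f := by
  induction t <;> simp_all [Tm.mapAtoms, Tm.atoms, Finset.image_union, Finset.biUnion_image]

/-- Renaming to an atom that does not occur is a transposition. -/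
theorem renameAtom_eq_swap (t : Tm σ) (a b : Atom) (hb : b ∉ t.atoms) :
    t.renameAtom a b = t.mapAtoms (Equiv.swap a b) := by
  refine mapAtoms_congr t fun c hc => ?_
  have : c ≠ b := fun h => hb (h ▸ hc)
  by_cases h : c = a
  · simp [h]
  · simp [h, Equiv.swap_apply_of_ne_of_ne h this]

theorem atoms_renameAtom_subset {t : Tm σ} {w : Finset Atom} (h : t.atoms ⊆ w) (a b : Atom) :
    (t.renameAtom a b).atoms ⊆ insert b w := by
  rw [Tm.renameAtom, atoms_mapAtoms]
  intro c hc
  obtain ⟨d, hd, rfl⟩ := Finset.mem_image.1 hc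
  have := h hd
  by_cases hda : d = a <;> simp_all

end AtomLemmas

/-! ### The congruence generated by α-equivalence of ground binding pairs -/

/-- `Cong σ w e e'`: the terms `e` and `e'`, with atoms in the world `w`, differ only by
α-conversion of ground binding pairs. It is the congruence on all terms generated by `binda`, which
quantifies over all atoms fresh for `w` so that monotonicity in `w` is immediate. In `binda` the
bodies are ground, since renaming an atom does not commute with substitution otherwise. -/
inductive Cong (σ : Sig) : Finset Atom → Tm σ → Tm σ → Prop where
  | var : Cong σ w (Tm.var n) (Tm.var n)
  | unit : Cong σ w Tm.unit Tm.unit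
  | pair : Cong σ w t₁ t₁' → Cong σ w t₂ t₂' → Cong σ w (Tm.pair t₁ t₂) (Tm.pair t₁' t₂')
  | fn : Cong σ w e e' → Cong σ w (Tm.fn e) (Tm.fn e')
  | con : Cong σ w t t' → Cong σ w (Tm.con c t) (Tm.con c t')
  | atom : a ∈ w → Cong σ w (Tm.atom a) (Tm.atom a)
  | bindc : Cong σ w t₁ t₁' → Cong σ w t₂ t₂' →
      Cong σ w (Tm.bindv t₁ t₂) (Tm.bindv t₁' t₂')
  | binda : Ground v → Ground v' → a ∈ w → a' ∈ w → v.atoms ⊆ w → v'.atoms ⊆ w →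
      (∀ b, b ∉ w → Cong σ (insert b w) (v.renameAtom a b) (v'.renameAtom a' b)) →
      Cong σ w (Tm.bindv (Tm.atom a) v) (Tm.bindv (Tm.atom a') v')
  | lett : Cong σ w e₁ e₁' → Cong σ w e₂ e₂' → Cong σ w (Tm.lett e₁ e₂) (Tm.lett e₁' e₂')
  | fst : Cong σ w t t' → Cong σ w (Tm.fst t) (Tm.fst t')
  | snd : Cong σ w t t' → Cong σ w (Tm.snd t) (Tm.snd t')
  | app : Cong σ w t₁ t₁' → Cong σ w t₂ t₂' → Cong σ w (Tm.app t₁ t₂) (Tm.app t₁' t₂')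
  | case (br br' : σ.C → Tm σ) : Cong σ w t t' → (∀ c, Cong σ w (br c) (br' c)) →
      Cong σ w (Tm.case t br) (Tm.case t' br')
  | fresh : Cong σ w Tm.fresh Tm.fresh
  | unbind : Cong σ w t t' → Cong σ w (Tm.unbind t) (Tm.unbind t')
  | obs (o : σ.O) (args args' : Fin (σ.arity o) → Tm σ) :
      (∀ i, Cong σ w (args i) (args' i)) → Cong σ w (Tm.obs o args) (Tm.obs o args')

section CongLemmas

variable {σ : Sig}

theorem Cong.mono {w : Finset Atom} {e e' : Tm σ} (h : Cong σ w e e') {w' : Finset Atom}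
    (hw : w ⊆ w') : Cong σ w' e e' := by
  induction h generalizing w' with
  | atom ha => exact .atom (hw ha)
  | binda hv hv' ha ha' hvw hvw' _ ih =>
    exact .binda hv hv' (hw ha) (hw ha') (hvw.trans hw) (hvw'.trans hw)
      fun b hb => ih b (fun h => hb (hw h)) (Finset.insert_subset_insert _ hw)
  | _ => constructor <;> simp_all

theorem Cong.symm {w : Finset Atom} {e e' : Tm σ} (h : Cong σ w e e') : Cong σ w e' e := by
  induction h with
  | binda hv hv' ha ha' hvw hvw' _ ih => exact .binda hv' hv ha' ha hvw' hvw ih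
  | _ => constructor <;> assumption

theorem Cong.refl {w : Finset Atom} (e : Tm σ) (h : e.atoms ⊆ w) : Cong σ w e e := by
  induction e with
  | bindv _ _ ih₁ ih₂ =>
    simp only [Tm.atoms, Finset.union_subset_iff] at h
    exact .bindc (ih₁ h.1) (ih₂ h.2)
  | _ => constructor <;> simp_all [Tm.atoms, Finset.union_subset_iff]

theorem Cong.atoms_subset {w : Finset Atom} {e e' : Tm σ} (h : Cong σ w e e') :
    e.atoms ⊆ w := by
  induction h with
  | binda hv hv' ha ha' hvw hvw' _ ih =>
    simp_all [Tm.atoms, Finset.insert_subset_iff]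
  | _ => simp_all [Tm.atoms, Finset.union_subset_iff]

theorem mapAtoms_renameAtom (v : Tm σ) (π : Equiv.Perm Atom) (a b : Atom) :
    (v.renameAtom a b).mapAtoms π = (v.mapAtoms π).renameAtom (π a) (π b) := by
  simp only [Tm.renameAtom, mapAtoms_comp]
  congr 1
  funext c
  by_cases h : c = a <;> simp [h]

theorem Cong.equivariant {w : Finset Atom} {e e' : Tm σ} (h : Cong σ w e e')
    (π : Equiv.Perm Atom) : Cong σ (w.image π) (e.mapAtoms π) (e'.mapAtoms π) := by
  induction h with
  | atom ha => exact .atom (Finset.mem_image_of_mem _ ha)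
  | bindc _ _ ih₁ ih₂ => exact .bindc ih₁ ih₂
  | @binda v v' a w a' hv hv' ha ha' hvw hvw' _ ih =>
    simp only [Tm.mapAtoms]
    refine .binda (hv.mapAtoms _) (hv'.mapAtoms _) (Finset.mem_image_of_mem _ ha)
      (Finset.mem_image_of_mem _ ha') ?_ ?_ fun b hb => ?_
    · rw [atoms_mapAtoms]; exact Finset.image_subset_image hvw
    · rw [atoms_mapAtoms]; exact Finset.image_subset_image hvw'
    · have := ih (π.symm b) fun h => hb (by simpa using Finset.mem_image_of_mem π h)
      simpa only [mapAtoms_renameAtom, Finset.image_insert, Equiv.apply_symm_apply] using this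
  | _ => simp only [Tm.mapAtoms]; constructor <;> assumption

theorem Cong.renameAtom {w : Finset Atom} {e e' : Tm σ} (h : Cong σ w e e') {a b : Atom}
    (hb : b ∉ w) : Cong σ (insert b w) (e.renameAtom a b) (e'.renameAtom a b) := by
  rw [renameAtom_eq_swap _ _ _ fun h' => hb (h.atoms_subset h'),
    renameAtom_eq_swap _ _ _ fun h' => hb (h.symm.atoms_subset h')]
  refine (h.equivariant _).mono fun c hc => ?_
  obtain ⟨d, hd, rfl⟩ := Finset.mem_image.1 hc
  have hdb : d ≠ b := fun h => hb (h ▸ hd)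
  by_cases hda : d = a
  · simp [hda]
  · simp [Equiv.swap_apply_of_ne_of_ne hda hdb, hd]

theorem Cong.renV {w : Finset Atom} {e e' : Tm σ} (h : Cong σ w e e') (r : ℕ → ℕ) :
    Cong σ w (e.renV r) (e'.renV r) := by
  induction h generalizing r with
  | bindc _ _ ih₁ ih₂ => exact .bindc (ih₁ r) (ih₂ r)
  | binda hv hv' ha ha' hvw hvw' hr _ =>
    simp only [Tm.renV, hv.renV, hv'.renV]
    exact .binda hv hv' ha ha' hvw hvw' hr
  | _ => simp only [Tm.renV]; constructor <;> simp_all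

theorem Cong.ups {w : Finset Atom} {ρ ρ' : ℕ → Tm σ} (h : ∀ n, Cong σ w (ρ n) (ρ' n)) (n : ℕ) :
    Cong σ w (Tm.ups ρ n) (Tm.ups ρ' n) := by
  cases n with
  | zero => exact .var
  | succ n => exact (h n).renV _

theorem Cong.subst {w : Finset Atom} {e e' : Tm σ} (h : Cong σ w e e') {ρ ρ' : ℕ → Tm σ}
    (hρ : ∀ n, Cong σ w (ρ n) (ρ' n)) : Cong σ w (e.subst ρ) (e'.subst ρ') := by
  induction h generalizing ρ ρ' with
  | var => exact hρ _
  | bindc _ _ ih₁ ih₂ => exact .bindc (ih₁ hρ) (ih₂ hρ)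
  | binda hv hv' ha ha' hvw hvw' hr _ =>
    simp only [Tm.subst, hv.subst, hv'.subst]
    exact .binda hv hv' ha ha' hvw hvw' hr
  | fn _ ih => exact .fn (ih (Cong.ups (Cong.ups hρ)))
  | lett _ _ ih₁ ih₂ => exact .lett (ih₁ hρ) (ih₂ (Cong.ups hρ))
  | case _ _ _ _ ih₁ ih₂ => exact .case _ _ (ih₁ hρ) fun c => ih₂ c (Cong.ups hρ)
  | _ => simp only [Tm.subst]; constructor <;> simp_all

theorem Cong.subst1 {w : Finset Atom} {e e' v v' : Tm σ} (h : Cong σ w e e')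
    (hv : Cong σ w v v') : Cong σ w (e.subst1 v) (e'.subst1 v') :=
  h.subst fun n => by
    match n with
    | 0 => exact hv
    | _ + 1 => exact .var

theorem Cong.subst2 {w : Finset Atom} {e e' v v' f f' : Tm σ} (h : Cong σ w e e')
    (hv : Cong σ w v v') (hf : Cong σ w f f') : Cong σ w (e.subst2 v f) (e'.subst2 v' f') :=
  h.subst fun n => by
    match n with
    | 0 => exact hv
    | 1 => exact hf
    | _ + 2 => exact .var

theorem Cong.isVal {w : Finset Atom} {v v' : Tm σ} (h : Cong σ w v v') (hv : IsVal v) :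
    IsVal v' := by
  induction h with
  | binda _ hv' => exact .bindv .atom hv'.isVal
  | bindc _ _ ih₁ ih₂ => cases hv with | bindv h₁ h₂ => exact .bindv (ih₁ h₁) (ih₂ h₂)
  | pair _ _ ih₁ ih₂ => cases hv with | pair h₁ h₂ => exact .pair (ih₁ h₁) (ih₂ h₂)
  | con _ ih => cases hv with | con h => exact .con (ih h)
  | var => exact .var
  | unit => exact .unit
  | fn => exact .fn
  | atom => exact .atom
  | _ => cases hv

theorem AlphaEq.ground {w : Finset Atom} {v v' : Tm σ} {ar : Ty σ.D} (h : AlphaEq σ w v v' ar) :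
    Ground v ∧ Ground v' := by
  induction h with
  | unit => exact ⟨.unit, .unit⟩
  | pair _ _ ih₁ ih₂ => exact ⟨.pair ih₁.1 ih₂.1, .pair ih₁.2 ih₂.2⟩
  | con _ ih => exact ⟨.con ih.1, .con ih.2⟩
  | atom => exact ⟨.atom, .atom⟩
  | bindv _ _ _ _ _ _ _ _ ih => exact ⟨.bindv ih.1.of_mapAtoms, .bindv ih.2.of_mapAtoms⟩

/-- The single fresh atom in the definition of α-equivalence can be exchanged for any other one
by a transposition. -/
theorem AlphaEq.cong {w : Finset Atom} {v v' : Tm σ} {ar : Ty σ.D} (h : AlphaEq σ w v v' ar) :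
    Cong σ w v v' := by
  induction h with
  | unit => exact .unit
  | pair _ _ ih₁ ih₂ => exact .pair ih₁ ih₂
  | con _ ih => exact .con ih
  | atom ha => exact .atom ha
  | @bindv w ar a a' c v v' hc hsub hα ih =>
    simp only [Finset.insert_subset_iff, Finset.union_subset_iff] at hsub
    obtain ⟨ha, ha', hv, hv'⟩ := hsub
    refine .binda hα.ground.1.of_mapAtoms hα.ground.2.of_mapAtoms ha ha' hv hv' fun b hb => ?_
    have key : ∀ (t : Tm σ) (d : Atom), t.atoms ⊆ w →
        (t.renameAtom d c).mapAtoms (Equiv.swap c b) = t.renameAtom d b := by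
      intro t d ht
      simp only [Tm.renameAtom, mapAtoms_comp]
      refine mapAtoms_congr t fun x hx => ?_
      by_cases h : x = d
      · simp [h]
      · have h₁ : x ≠ c := fun h => hc (h ▸ ht hx)
        have h₂ : x ≠ b := fun h => hb (h ▸ ht hx)
        simp [h, Equiv.swap_apply_of_ne_of_ne h₁ h₂]
    have := ih.equivariant (Equiv.swap c b)
    rw [key v a hv, key v' a' hv'] at this
    refine this.mono fun x hx => ?_
    rw [Finset.image_insert, Equiv.swap_apply_left, Finset.mem_insert] at hx
    rcases hx with rfl | hx
    · simp
    · obtain ⟨y, hy, rfl⟩ := Finset.mem_image.1 hx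
      have h₁ : y ≠ c := fun h => hc (h ▸ hy)
      have h₂ : y ≠ b := fun h => hb (h ▸ hy)
      simp [Equiv.swap_apply_of_ne_of_ne h₁ h₂, hy]

end CongLemmas

/-! ### The congruence is a simulation -/

/-- `Cong` extended to frame stacks. -/
inductive CongStk (σ : Sig) : Finset Atom → Stk σ → Stk σ → Prop where
  | id : CongStk σ w Stk.id Stk.id
  | cons : CongStk σ w S S' → Cong σ w e e' → CongStk σ w (Stk.cons S e) (Stk.cons S' e')

section Simulation

variable {σ : Sig}

theorem CongStk.mono {w w' : Finset Atom} {S S' : Stk σ} (h : CongStk σ w S S') (hw : w ⊆ w') :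
    CongStk σ w' S S' := by
  induction h with
  | id => exact .id
  | cons _ h ih => exact .cons ih (h.mono hw)

theorem CongStk.symm {w : Finset Atom} {S S' : Stk σ} (h : CongStk σ w S S') :
    CongStk σ w S' S := by
  induction h with
  | id => exact .id
  | cons _ h ih => exact .cons ih h.symm

theorem CongStk.refl {w : Finset Atom} (S : Stk σ) (h : S.atoms ⊆ w) : CongStk σ w S S := by
  induction S with
  | id => exact .id
  | cons S e ih =>
    simp only [Stk.atoms, Finset.union_subset_iff] at h
    exact .cons (ih h.1) (Cong.refl e h.2)

/-- Configurations with the same state, congruent stacks and congruent terms. -/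
def CongConf (σ : Sig) (c c' : Config σ) : Prop :=
  c.st = c'.st ∧ CongStk σ c.st.toFinset c.stk c'.stk ∧ Cong σ c.st.toFinset c.tm c'.tm

theorem atoms_numeral (n : ℕ) : (numeral σ n).atoms = ∅ := by
  induction n <;> simp_all [numeral, Tm.atoms]

theorem toFinset_append_singleton (s : List Atom) (a : Atom) :
    (s ++ [a]).toFinset = insert a s.toFinset := by
  ext; simp

/-- Each transition is matched by one making the same choice of fresh atom, so the states remain
equal and the observations, whatever they are, agree. -/
theorem CongConf.step {c₁ c₂ c₁' : Config σ} (hs : Step σ c₁ c₂) (h : CongConf σ c₁ c₁') :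
    ∃ c₂', Step σ c₁' c₂' ∧ CongConf σ c₂ c₂' := by
  obtain ⟨s', S', e'⟩ := c₁'
  obtain ⟨h₁, h₂, h₃⟩ := h
  cases hs with
  | pop hv =>
    obtain rfl := h₁
    cases h₂ with
    | cons hS he => exact ⟨_, .pop (h₃.isVal hv), rfl, hS, he.subst1 h₃⟩
  | lett =>
    obtain rfl := h₁
    cases h₃ with
    | lett g₁ g₂ => exact ⟨_, .lett, rfl, .cons h₂ g₂, g₁⟩
  | case br hv =>
    obtain rfl := h₁
    cases h₃ with
    | case _ _ g₁ g₂ =>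
      cases g₁ with
      | con g => exact ⟨_, .case _ (g.isVal hv), rfl, h₂, (g₂ _).subst1 g⟩
  | fst hv₁ hv₂ =>
    obtain rfl := h₁
    cases h₃ with
    | fst g =>
      cases g with
      | pair g₁ g₂ => exact ⟨_, .fst (g₁.isVal hv₁) (g₂.isVal hv₂), rfl, h₂, g₁⟩
  | snd hv₁ hv₂ =>
    obtain rfl := h₁
    cases h₃ with
    | snd g =>
      cases g with
      | pair g₁ g₂ => exact ⟨_, .snd (g₁.isVal hv₁) (g₂.isVal hv₂), rfl, h₂, g₂⟩
  | app hv =>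
    obtain rfl := h₁
    cases h₃ with
    | app g₁ g₂ =>
      cases g₁ with
      | fn g => exact ⟨_, .app (g₂.isVal hv), rfl, h₂, g.subst2 g₂ (.fn g)⟩
  | fresh hb =>
    obtain rfl := h₁
    cases h₃ with
    | fresh =>
      refine ⟨_, .fresh hb, rfl, h₂.mono ?_, .atom ?_⟩ <;> simp
  | @unbind s b v S a hb hv =>
    obtain rfl := h₁
    have hb' : b ∉ s.toFinset := by simpa using hb
    have hsub : s.toFinset ⊆ (s ++ [b]).toFinset := by simp
    have hmem : b ∈ (s ++ [b]).toFinset := by simp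
    cases h₃ with
    | unbind g =>
      cases g with
      | bindc g₁ g₂ =>
        cases g₁ with
        | atom =>
          refine ⟨_, .unbind hb (g₂.isVal hv), rfl, h₂.mono hsub, .pair (.atom hmem) ?_⟩
          simp only [toFinset_append_singleton]
          exact g₂.renameAtom hb'
      | binda gv gv' _ _ _ _ gr =>
        refine ⟨_, .unbind hb gv'.isVal, rfl, h₂.mono hsub, .pair (.atom hmem) ?_⟩
        simp only [toFinset_append_singleton]
        exact gr b hb'
  | obs o as has =>
    obtain rfl := h₁
    cases h₃ with
    | obs _ _ args' g =>
      obtain rfl : args' = fun i => Tm.atom (as i) := by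
        funext i
        have := g i
        generalize args' i = t at this
        cases this
        rfl
      exact ⟨_, .obs o as has, rfl, h₂, Cong.refl _ (by simp [atoms_numeral])⟩

theorem CongConf.term {c c' : Config σ} (h : CongConf σ c c') (ht : Term σ c) : Term σ c' := by
  obtain ⟨n, ht⟩ := ht
  induction ht generalizing c' with
  | val hv =>
    obtain ⟨s', S', e'⟩ := c'
    obtain ⟨h₁, h₂, h₃⟩ := h
    obtain rfl := h₁
    cases h₂
    exact ⟨0, .val (h₃.isVal hv)⟩
  | step hs _ ih =>
    obtain ⟨c₂', hs', h'⟩ := h.step hs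
    obtain ⟨n, hn⟩ := ih h'
    exact ⟨n + 1, .step hs' hn⟩

/-- α-equivalent values of a nominal arity are operationally equivalent. -/
theorem AlphaEq.opEq {w : Finset Atom} {v v' : Tm σ} {ar : Ty σ.D} (h : AlphaEq σ w v v' ar)
    (ht : HasTy σ [] v ar) (ht' : HasTy σ [] v' ar) : OpEq σ w v v' ar := by
  refine ⟨Finset.union_subset h.cong.atoms_subset h.cong.symm.atoms_subset, ht, ht', ?_⟩
  intro s S τ' _ hs _
  obtain ⟨hs₁, hs₂⟩ := Finset.union_subset_iff.1 hs
  have hS := CongStk.refl S hs₂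
  have hc := h.cong.mono hs₁
  exact ⟨CongConf.term ⟨rfl, hS, hc⟩, CongConf.term ⟨rfl, hS.symm, hc.symm⟩⟩

end Simulation

/-! ### Termination of redexes -/

section Redexes

variable {σ : Sig} {s : List Atom} {S : Stk σ}

theorem Term.of_step {c c' : Config σ} (hs : Step σ c c') (h : Term σ c') : Term σ c := by
  obtain ⟨n, h⟩ := h
  exact ⟨n + 1, .step hs h⟩

theorem Term.exists_step {e : Tm σ} (h : Term σ ⟨s, S, e⟩) (he : ¬ IsVal e ∨ S ≠ .id) :
    ∃ c', Step σ ⟨s, S, e⟩ c' ∧ Term σ c' := by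
  obtain ⟨n, h⟩ := h
  cases h with
  | val hv => rcases he with h | h <;> contradiction
  | step hs h => exact ⟨_, hs, _, h⟩

theorem term_pop {v e : Tm σ} (hv : IsVal v) :
    Term σ ⟨s, .cons S e, v⟩ ↔ Term σ ⟨s, S, e.subst1 v⟩ := by
  refine ⟨fun h => ?_, .of_step (.pop hv)⟩
  obtain ⟨c', hs, h⟩ := h.exists_step (.inr (by simp))
  cases hs <;> first | exact h | cases hv

theorem term_lett {e₁ e₂ : Tm σ} :
    Term σ ⟨s, S, .lett e₁ e₂⟩ ↔ Term σ ⟨s, .cons S e₂, e₁⟩ := by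
  refine ⟨fun h => ?_, .of_step .lett⟩
  obtain ⟨c', hs, h⟩ := h.exists_step (.inl nofun)
  cases hs with
  | lett => exact h
  | pop hv => cases hv

theorem term_fst {v₁ v₂ : Tm σ} (h₁ : IsVal v₁) (h₂ : IsVal v₂) :
    Term σ ⟨s, S, .fst (.pair v₁ v₂)⟩ ↔ Term σ ⟨s, S, v₁⟩ := by
  refine ⟨fun h => ?_, .of_step (.fst h₁ h₂)⟩
  obtain ⟨c', hs, h⟩ := h.exists_step (.inl nofun)
  cases hs with
  | fst => exact h
  | pop hv => cases hv

theorem term_snd {v₁ v₂ : Tm σ} (h₁ : IsVal v₁) (h₂ : IsVal v₂) :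
    Term σ ⟨s, S, .snd (.pair v₁ v₂)⟩ ↔ Term σ ⟨s, S, v₂⟩ := by
  refine ⟨fun h => ?_, .of_step (.snd h₁ h₂)⟩
  obtain ⟨c', hs, h⟩ := h.exists_step (.inl nofun)
  cases hs with
  | snd => exact h
  | pop hv => cases hv

theorem term_case {c : σ.C} {v : Tm σ} {br : σ.C → Tm σ} (hv : IsVal v) :
    Term σ ⟨s, S, .case (.con c v) br⟩ ↔ Term σ ⟨s, S, (br c).subst1 v⟩ := by
  refine ⟨fun h => ?_, .of_step (.case br hv)⟩
  obtain ⟨c', hs, h⟩ := h.exists_step (.inl nofun)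
  cases hs with
  | case => exact h
  | pop hv => cases hv

theorem term_unbind {a : Atom} {v : Tm σ} (hv : IsVal v) :
    Term σ ⟨s, S, .unbind (.bindv (.atom a) v)⟩ ↔
      ∃ b, b ∉ s ∧ Term σ ⟨s ++ [b], S, .pair (.atom b) (v.renameAtom a b)⟩ := by
  refine ⟨fun h => ?_, fun ⟨b, hb, h⟩ => .of_step (.unbind hb hv) h⟩
  obtain ⟨c', hs, h⟩ := h.exists_step (.inl nofun)
  cases hs with
  | unbind hb => exact ⟨_, hb, h⟩
  | pop hv => cases hv

/-- The application of `eq` to two terms, as a function out of `Fin (arity eq)`. -/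
def eqTm (t₁ t₂ : Tm σ) : Tm σ := .obs σ.eqO fun i => if i.val = 0 then t₁ else t₂

theorem ofFn_of_eq_two {n : ℕ} (hn : n = 2) (a b : Atom) :
    List.ofFn (fun i : Fin n => if i.val = 0 then a else b) = [a, b] := by
  subst hn
  simp [List.ofFn_succ]

theorem term_eqTm {a b : Atom} (ha : a ∈ s) (hb : b ∈ s) :
    Term σ ⟨s, S, eqTm (.atom a) (.atom b)⟩ ↔
      Term σ ⟨s, S, numeral σ (if a = b then 0 else 1)⟩ := by
  have hval : σ.obsVal σ.eqO s
      (List.ofFn fun i : Fin (σ.arity σ.eqO) => if i.val = 0 then a else b) =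
        if a = b then 0 else 1 := by
    rw [ofFn_of_eq_two σ.eqArity, σ.eqSem]
  have hargs : (fun i : Fin (σ.arity σ.eqO) => if i.val = 0 then Tm.atom a else Tm.atom b) =
      fun i => (Tm.atom (if i.val = 0 then a else b) : Tm σ) := by
    funext i; split <;> rfl
  rw [eqTm, hargs, ← hval]
  constructor
  · intro h
    obtain ⟨c', hs, h⟩ := h.exists_step (.inl nofun)
    generalize hg : (fun i : Fin (σ.arity σ.eqO) =>
      (Tm.atom (if i.val = 0 then a else b) : Tm σ)) = g at hs
    cases hs with
    | obs _ as has =>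
      have : as = fun i => if i.val = 0 then a else b := by
        funext i
        have := congrFun hg i
        simpa using this.symm
      rwa [this] at h
    | pop hv => cases hv
  · exact .of_step (.obs _ _ fun i => by split <;> assumption)

/-- A closed divergent expression, typable at every type: `(fun(f x = f x)) ()`. -/
def omega : Tm σ := .app (.fn (.app (.var 1) (.var 0))) .unit

theorem not_term_omega : ¬ Term σ ⟨s, S, omega⟩ := by
  rintro ⟨n, h⟩
  induction n with
  | zero => cases h with | val hv => cases hv
  | succ n ih =>
    cases h with
    | step hs h =>
      cases hs with
      | pop hv => cases hv
      | app => exact ih h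

theorem hasTy_omega (Γ : List (Ty σ.D)) (τ : Ty σ.D) : HasTy σ Γ omega τ :=
  .app (τ := .unit) .fn .unit
    (.fn (.app (τ := .unit) .var .var (.var _ _ _ rfl) (.var _ _ _ rfl))) .unit

end Redexes

/-! ### Testing a value against a fixed ground value -/

section Testing

variable {σ : Sig}

/-- Shifting of the free variables by one. -/
def shift (t : Tm σ) : Tm σ := t.renV Nat.succ

open Classical in
/-- `test v ρ t` is an expression of type `unit` that terminates exactly when the value `t` is
α-equivalent to the ground value `v` in which each free atom `a` has been replaced by `ρ a`. The
environment `ρ` takes variables as values at the atoms `a` bound in `v`, which stand for the atom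
generated when the corresponding binding pair in `t` is unbound. -/
noncomputable def test : Tm σ → (Atom → Tm σ) → Tm σ → Tm σ
  | .unit, _, _ => .unit
  | .pair v₁ v₂, ρ, t =>
    .lett (.lett (.fst t) (test v₁ (fun a => shift (ρ a)) (.var 0)))
      (.lett (.snd (shift t)) (test v₂ (fun a => shift (shift (ρ a))) (.var 0)))
  | .con c v, ρ, t =>
    .case t fun c' => if c' = c then test v (fun a => shift (ρ a)) (.var 0) else omega
  | .atom a, ρ, t =>
    .lett (eqTm (ρ a) t) (.case (.var 0) fun c => if c = σ.zeroC then .unit else omega)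
  | .bindv (.atom a) v, ρ, t =>
    .lett (.unbind t) (.lett (.fst (.var 0)) (.lett (.snd (.var 1))
      (test v (fun b => if b = a then .var 1 else shift (shift (shift (ρ b)))) (.var 0))))
  | _, _, _ => .unit

/-- Variables and atoms: the terms over which the commutation of shifting with substitution is
immediate. -/
def Simple (t : Tm σ) : Prop := (∃ n, t = .var n) ∨ ∃ a, t = .atom a

theorem Simple.var (n : ℕ) : Simple (.var n : Tm σ) := .inl ⟨n, rfl⟩

theorem Simple.shift {t : Tm σ} (h : Simple t) : Simple (shift t) := by
  rcases h with ⟨n, rfl⟩ | ⟨a, rfl⟩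
  · exact .inl ⟨n + 1, rfl⟩
  · exact .inr ⟨a, rfl⟩

theorem Simple.isVal {t : Tm σ} (h : Simple t) : IsVal t := by
  rcases h with ⟨n, rfl⟩ | ⟨a, rfl⟩
  · exact .var
  · exact .atom

theorem Simple.shift_subst {t : Tm σ} (h : Simple t) (θ : ℕ → Tm σ) :
    (_root_.shift t).subst (Tm.ups θ) = _root_.shift (t.subst θ) := by
  rcases h with ⟨n, rfl⟩ | ⟨a, rfl⟩ <;> rfl

theorem Simple.shift_atoms {t : Tm σ} (h : Simple t) : (_root_.shift t).atoms = t.atoms := by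
  rcases h with ⟨n, rfl⟩ | ⟨a, rfl⟩ <;> rfl

theorem Simple.shift_hasTy {t : Tm σ} (h : Simple t) {Γ : List (Ty σ.D)} {τ τ' : Ty σ.D}
    (ht : HasTy σ Γ t τ) : HasTy σ (τ' :: Γ) (_root_.shift t) τ := by
  rcases h with ⟨n, rfl⟩ | ⟨a, rfl⟩
  · cases ht with
    | var _ _ _ h => exact .var _ _ _ (by simpa using h)
  · cases ht; exact .atom

theorem omega_subst (θ : ℕ → Tm σ) : (omega : Tm σ).subst θ = omega := rfl

theorem eqTm_subst (t₁ t₂ : Tm σ) (θ : ℕ → Tm σ) :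
    (eqTm t₁ t₂).subst θ = eqTm (t₁.subst θ) (t₂.subst θ) := by
  simp only [eqTm, Tm.subst, Tm.obs.injEq, heq_eq_eq, true_and]
  funext i
  split <;> rfl

theorem test_subst {v : Tm σ} (hv : Ground v) {ρ : Atom → Tm σ} (hρ : ∀ a, Simple (ρ a))
    {t : Tm σ} (ht : Simple t) (θ : ℕ → Tm σ) :
    (test v ρ t).subst θ = test v (fun a => (ρ a).subst θ) (t.subst θ) := by
  induction hv generalizing ρ t θ with
  | unit => rfl
  | pair _ _ ih₁ ih₂ =>
    simp only [test, Tm.subst, ht.shift_subst]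
    rw [ih₁ (fun a => (hρ a).shift) (.var 0), ih₂ (fun a => (hρ a).shift.shift) (.var 0)]
    simp only [fun a => (hρ a).shift.shift_subst, fun a => (hρ a).shift_subst, Tm.subst, Tm.ups]
  | con _ ih =>
    simp only [test, Tm.subst, Tm.case.injEq, true_and]
    funext c
    split
    · rw [ih (fun a => (hρ a).shift) (.var 0)]
      simp only [fun a => (hρ a).shift_subst, Tm.subst, Tm.ups]
    · rfl
  | atom =>
    simp only [test, Tm.subst, eqTm_subst, Tm.ups, Tm.lett.injEq, Tm.case.injEq, true_and]
    funext c
    split <;> rfl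
  | @bindv v a _ ih =>
    simp only [test, Tm.subst, Tm.ups, Tm.renV]
    rw [ih (fun b => ?_) (.var 0)]
    · congr 4
      funext b
      split
      · rfl
      · simp only [fun a => (hρ a).shift.shift.shift_subst, fun a => (hρ a).shift.shift_subst,
          fun a => (hρ a).shift_subst]
    · split
      · exact .var 1
      · exact (hρ b).shift.shift.shift

theorem test_hasTy {v : Tm σ} (hv : Ground v) {ar : Ty σ.D} (hvt : HasTy σ [] v ar)
    {Γ : List (Ty σ.D)} {ρ : Atom → Tm σ} (hρ : ∀ a, Simple (ρ a))
    (hρt : ∀ a, HasTy σ Γ (ρ a) .atm) {t : Tm σ} (ht : Simple t) (htt : HasTy σ Γ t ar) :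
    HasTy σ Γ (test v ρ t) .unit := by
  induction hv generalizing ar Γ ρ t with
  | unit => exact .unit
  | pair _ _ ih₁ ih₂ =>
    cases hvt with
    | pair _ _ t₁ t₂ =>
      exact .lett (.lett (.fst ht.isVal htt) (ih₁ t₁ (fun a => (hρ a).shift)
          (fun a => (hρ a).shift_hasTy (hρt a)) (.var 0) (.var _ _ _ rfl)))
        (.lett (.snd ht.shift.isVal (ht.shift_hasTy htt))
          (ih₂ t₂ (fun a => (hρ a).shift.shift)
          (fun a => (hρ a).shift.shift_hasTy ((hρ a).shift_hasTy (hρt a))) (.var 0)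
            (.var _ _ _ rfl)))
  | con _ ih =>
    cases hvt with
    | con _ tv =>
      refine .case _ ht.isVal htt fun c' _ => ?_
      split
      · next h =>
        subst h
        exact ih tv (fun a => (hρ a).shift)
          (fun a => (hρ a).shift_hasTy (hρt a)) (.var 0) (.var _ _ _ rfl)
      · exact hasTy_omega _ _
  | atom =>
    cases hvt
    refine .lett (.obs _ _ (fun i => ?_) fun i => ?_)
      (.case (δ := σ.natD) _ .var (.var _ _ _ rfl) fun c' _ => ?_)
    · split
      · exact (hρ _).isVal
      · exact ht.isVal
    · split
      · exact hρt _
      · exact htt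
    · split
      · exact .unit
      · exact hasTy_omega _ _
  | @bindv v a _ ih =>
    cases hvt with
    | bindv _ _ _ tv =>
      refine .lett (.unbind ht.isVal htt) (.lett (.fst .var (.var _ _ _ rfl))
        (.lett (.snd .var (.var _ _ _ rfl)) (ih tv (fun b => ?_) (fun b => ?_) (.var 0)
          (.var _ _ _ rfl))))
      · split
        · exact .var 1
        · exact (hρ b).shift.shift.shift
      · split
        · exact .var _ _ _ rfl
        · exact (hρ b).shift.shift.shift_hasTy
            ((hρ b).shift.shift_hasTy ((hρ b).shift_hasTy (hρt b)))

theorem test_atoms {v : Tm σ} (hv : Ground v) {w : Finset Atom} {ρ : Atom → Tm σ}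
    (hρ : ∀ a, Simple (ρ a)) (hρw : ∀ a ∈ v.atoms, (ρ a).atoms ⊆ w) {t : Tm σ} (ht : Simple t)
    (htw : t.atoms ⊆ w) : (test v ρ t).atoms ⊆ w := by
  induction hv generalizing ρ t with
  | unit => simp [test, Tm.atoms]
  | pair _ _ ih₁ ih₂ =>
    simp only [Tm.atoms, Finset.mem_union] at hρw
    simp only [test, Tm.atoms, Finset.union_subset_iff, ht.shift_atoms]
    refine ⟨⟨htw, ih₁ (fun a => (hρ a).shift) (fun a ha => ?_) (.var 0) (by simp [Tm.atoms])⟩,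
      htw, ih₂ (fun a => (hρ a).shift.shift) (fun a ha => ?_) (.var 0) (by simp [Tm.atoms])⟩
    · rw [(hρ a).shift_atoms]; exact hρw a (.inl ha)
    · rw [(hρ a).shift.shift_atoms, (hρ a).shift_atoms]; exact hρw a (.inr ha)
  | con _ ih =>
    simp only [test, Tm.atoms, Finset.union_subset_iff, Finset.biUnion_subset]
    refine ⟨htw, fun c' _ => ?_⟩
    split
    · refine ih (fun a => (hρ a).shift) (fun a ha => ?_) (.var 0) (by simp [Tm.atoms])
      rw [(hρ a).shift_atoms]; exact hρw a ha
    · simp [omega, Tm.atoms]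
  | @atom a =>
    simp only [test, eqTm, Tm.atoms, Finset.union_subset_iff, Finset.biUnion_subset]
    refine ⟨fun i _ => ?_, by simp, fun c _ => ?_⟩
    · split
      · exact hρw a (by simp [Tm.atoms])
      · exact htw
    · split <;> simp [omega, Tm.atoms]
  | @bindv v a _ ih =>
    simp only [Tm.atoms, Finset.mem_union] at hρw
    simp only [test, Tm.atoms, Finset.union_subset_iff]
    refine ⟨htw, by simp, by simp, ih (fun b => ?_) (fun b hb => ?_) (.var 0)
      (by simp [Tm.atoms])⟩
    · split
      · exact .var 1
      · exact (hρ b).shift.shift.shift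
    · split
      · simp [Tm.atoms]
      · rw [(hρ b).shift.shift.shift_atoms, (hρ b).shift.shift_atoms, (hρ b).shift_atoms]
        exact hρw b (.inr hb)

/-- The test of a closed value against the ground value `v` with atoms renamed by `f`. -/
noncomputable def testC (v : Tm σ) (f : Atom → Atom) (t : Tm σ) : Tm σ :=
  test v (fun a => .atom (f a)) t

theorem testC_subst {v : Tm σ} (hv : Ground v) (f : Atom → Atom) {t : Tm σ} (ht : Simple t)
    (θ : ℕ → Tm σ) : (testC v f t).subst θ = testC v f (t.subst θ) :=
  test_subst hv (fun a => .inr ⟨f a, rfl⟩) ht θ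

variable {s : List Atom} {S : Stk σ} {f : Atom → Atom}

theorem term_testC_pair {v₁ v₂ u₁ u₂ : Tm σ} (h₁ : Ground v₁)
    (hu₁ : Ground u₁) (hu₂ : Ground u₂) :
    Term σ ⟨s, S, testC (.pair v₁ v₂) f (.pair u₁ u₂)⟩ ↔
      Term σ ⟨s, .cons S (.lett (.snd (.pair u₁ u₂)) (testC v₂ f (.var 0))),
        testC v₁ f u₁⟩ := by
  have : testC (.pair v₁ v₂) f (.pair u₁ u₂) =
      .lett (.lett (.fst (.pair u₁ u₂)) (testC v₁ f (.var 0)))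
        (.lett (.snd (.pair u₁ u₂)) (testC v₂ f (.var 0))) := by
    simp only [testC, test, shift, Tm.renV, hu₁.renV, hu₂.renV]
  rw [this, term_lett, term_lett, term_fst hu₁.isVal hu₂.isVal, term_pop hu₁.isVal, Tm.subst1,
    testC_subst h₁ f (.var 0)]
  rfl

theorem term_testC_pair' {v₂ u₁ u₂ : Tm σ} (h₂ : Ground v₂)
    (hu₁ : Ground u₁) (hu₂ : Ground u₂) :
    Term σ ⟨s, .cons S (.lett (.snd (.pair u₁ u₂)) (testC v₂ f (.var 0))), .unit⟩ ↔
      Term σ ⟨s, S, testC v₂ f u₂⟩ := by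
  rw [term_pop .unit, Tm.subst1, Tm.subst, term_lett, Tm.subst, (hu₁.pair hu₂).subst,
    term_snd hu₁.isVal hu₂.isVal, term_pop hu₂.isVal, testC_subst h₂ f (.var 0), Tm.subst1,
    Tm.subst, Tm.ups, testC_subst h₂ f (.var 0)]
  rfl

open Classical in
theorem term_testC_con {c c' : σ.C} {v u : Tm σ} (hv : Ground v) (hu : Ground u) :
    Term σ ⟨s, S, testC (.con c v) f (.con c' u)⟩ ↔
      c' = c ∧ Term σ ⟨s, S, testC v f u⟩ := by
  rw [testC, test, term_case hu.isVal]
  by_cases h : c' = c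
  · simp only [h, if_true, true_and, Tm.subst1]
    change Term σ ⟨s, S, (testC v f (.var 0)).subst _⟩ ↔ _
    rw [testC_subst hv f (.var 0)]
    rfl
  · simp only [h, if_false, false_and, iff_false, Tm.subst1, omega_subst]
    exact not_term_omega

open Classical in
theorem term_testC_atom {a b : Atom} (hfa : f a ∈ s) (hb : b ∈ s) :
    Term σ ⟨s, S, testC (.atom a) f (.atom b)⟩ ↔ f a = b ∧ Term σ ⟨s, S, .unit⟩ := by
  rw [testC, test, term_lett, term_eqTm hfa hb]
  have hne : σ.succC ≠ σ.zeroC := by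
    intro h
    have h₁ := σ.succArg
    rw [h, σ.zeroArg] at h₁
    cases h₁
  by_cases h : f a = b
  · simp only [h, if_true, true_and, numeral]
    rw [term_pop (.con .unit)]
    simp only [Tm.subst1, Tm.subst, Tm.cons1]
    rw [term_case .unit]
    simp [Tm.subst1, Tm.subst]
  · simp only [h, if_false, false_and, iff_false, numeral]
    rw [term_pop (.con (.con .unit))]
    simp only [Tm.subst1, Tm.subst, Tm.cons1]
    rw [term_case (.con .unit)]
    simp only [hne, if_false, Tm.subst1, omega_subst]
    exact not_term_omega

theorem term_testC_bindv {a a' : Atom} {v u : Tm σ} (hv : Ground v) (hu : Ground u) :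
    Term σ ⟨s, S, testC (.bindv (.atom a) v) f (.bindv (.atom a') u)⟩ ↔
      ∃ b, b ∉ s ∧ Term σ ⟨s ++ [b], S,
        testC v (fun x => if x = a then b else f x) (u.renameAtom a' b)⟩ := by
  rw [testC, test, term_lett, term_unbind hu.isVal]
  refine exists_congr fun b => and_congr_right fun _ => ?_
  have hu' : Ground (u.renameAtom a' b) := hu.mapAtoms _
  generalize u.renameAtom a' b = u' at hu'
  have hp : Ground (Tm.pair (.atom b) u') := .pair .atom hu'
  have hs : ∀ x, Simple (if x = a then (.var 1 : Tm σ) else .atom (f x)) := by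
    intro x
    split
    · exact .var 1
    · exact .inr ⟨_, rfl⟩
  have hs' : ∀ x, Simple (if x = a then (.atom b : Tm σ) else .atom (f x)) := by
    intro x
    split <;> exact .inr ⟨_, rfl⟩
  rw [term_pop hp.isVal]
  simp only [Tm.subst1, shift, Tm.renV, Tm.subst]
  rw [term_lett]
  simp only [Tm.cons1, Tm.ups]
  rw [term_fst .atom hu'.isVal, term_pop .atom]
  simp only [Tm.subst1, Tm.subst, hp.renV, hp.subst]
  rw [term_lett, term_snd .atom hu'.isVal, term_pop hu'.isVal, test_subst hv hs (.var 0)]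
  have e₁ : (fun x => (if x = a then (.var 1 : Tm σ) else .atom (f x)).subst
      (Tm.ups (Tm.ups (Tm.cons1 (.pair (.atom b) u'))))) =
      fun x => if x = a then .var 1 else .atom (f x) := by
    funext x; split <;> rfl
  have e₂ : (fun x => (if x = a then (.var 1 : Tm σ) else .atom (f x)).subst
      (Tm.ups (Tm.cons1 (.atom b)))) =
      fun x => if x = a then .atom b else .atom (f x) := by
    funext x; split <;> rfl
  have e₃ : (fun x => (if x = a then (.atom b : Tm σ) else .atom (f x)).subst
      (Tm.cons1 u')) = fun x => .atom (if x = a then b else f x) := by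
    funext x; split <;> rfl
  rw [e₁]
  change Term σ ⟨_, _, ((test v _ (.var 0)).subst _).subst _⟩ ↔ _
  rw [test_subst hv hs (.var 0), e₂]
  change Term σ ⟨_, _, (test v _ (.var 0)).subst _⟩ ↔ _
  rw [test_subst hv hs' (.var 0), e₃]
  rfl

/-- α-equivalence is independent of the atoms of the world that do not occur in the values. -/
theorem AlphaEq.strengthen {w : Finset Atom} {v v' : Tm σ} {ar : Ty σ.D}
    (h : AlphaEq σ w v v' ar) {w' : Finset Atom} (hw : w' ⊆ w) (hv : v.atoms ⊆ w')
    (hv' : v'.atoms ⊆ w') : AlphaEq σ w' v v' ar := by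
  induction h generalizing w' with
  | unit => exact .unit
  | pair _ _ ih₁ ih₂ =>
    simp only [Tm.atoms, Finset.union_subset_iff] at hv hv'
    exact .pair (ih₁ hw hv.1 hv'.1) (ih₂ hw hv.2 hv'.2)
  | con _ ih => exact .con (ih hw hv hv')
  | atom => exact .atom (hv (by simp [Tm.atoms]))
  | bindv a a' b v v' hb _ _ ih =>
    simp only [Tm.atoms, Finset.union_subset_iff, Finset.singleton_subset_iff] at hv hv'
    refine .bindv _ _ b _ _ (fun h => hb (hw h)) ?_
      (ih (Finset.insert_subset_insert _ hw) (atoms_renameAtom_subset hv.2 _ _)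
        (atoms_renameAtom_subset hv'.2 _ _))
    simp only [Finset.insert_subset_iff, Finset.union_subset_iff]
    exact ⟨hv.1, hv'.1, hv.2, hv'.2⟩

/-- Updating an injective renaming at a bound atom agrees with renaming afterwards. -/
theorem mapAtoms_update {v : Tm σ} {a b : Atom} (hinj : Set.InjOn f (insert a v.atoms : Finset _)) :
    v.mapAtoms (fun x => if x = a then b else f x) = (v.mapAtoms f).renameAtom (f a) b := by
  rw [Tm.renameAtom, mapAtoms_comp]
  refine mapAtoms_congr v fun x hx => ?_
  by_cases h : x = a
  · simp [h]
  · have : f x ≠ f a := fun e => h (hinj (by simp [hx]) (by simp) e)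
    simp [h, this]

theorem injOn_update {A : Finset Atom} {a b : Atom} (hinj : Set.InjOn f A)
    (hmap : ∀ x ∈ A, f x ∈ s) (hb : b ∉ s) :
    Set.InjOn (fun x => if x = a then b else f x) A := by
  intro x hx y hy h
  have hx' : f x ≠ b := fun e => hb (e ▸ hmap x hx)
  have hy' : f y ≠ b := fun e => hb (e ▸ hmap y hy)
  by_cases h₁ : x = a <;> by_cases h₂ : y = a <;> simp only [h₁, h₂, if_true, if_false] at h ⊢
  · exact absurd h.symm hy'
  · exact absurd h hx'
  · exact hinj hx hy h

/-- A renamed ground value passes its own test. -/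
theorem test_complete {v : Tm σ} (hv : Ground v) (hinj : Set.InjOn f v.atoms)
    (hmap : ∀ x ∈ v.atoms, f x ∈ s) (hS : ∀ l, Term σ ⟨s ++ l, S, .unit⟩) :
    Term σ ⟨s, S, testC v f (v.mapAtoms f)⟩ := by
  induction hv generalizing f s S with
  | unit => simpa [testC, test] using hS []
  | pair h₁ h₂ ih₁ ih₂ =>
    simp only [Tm.atoms, Finset.coe_union, Finset.mem_union] at hinj hmap
    refine (term_testC_pair h₁ (h₁.mapAtoms f) (h₂.mapAtoms f)).2 (ih₁
      (hinj.mono Set.subset_union_left) (fun x hx => hmap x (.inl hx)) fun l => ?_)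
    refine (term_testC_pair' h₂ (h₁.mapAtoms f) (h₂.mapAtoms f)).2 (ih₂
      (hinj.mono Set.subset_union_right) (fun x hx => by simp [hmap x (.inr hx)]) fun l' => ?_)
    rw [List.append_assoc]
    exact hS _
  | con h ih =>
    exact (term_testC_con h (h.mapAtoms f)).2 ⟨rfl, ih hinj hmap hS⟩
  | @atom a =>
    have := hmap a (by simp [Tm.atoms])
    exact (term_testC_atom this this).2 ⟨rfl, by simpa using hS []⟩
  | @bindv v a h ih =>
    have hat : (Tm.bindv (.atom a) v).atoms = insert a v.atoms := by
      simp [Tm.atoms]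
    rw [hat] at hinj hmap
    refine (term_testC_bindv h (h.mapAtoms f)).2 ?_
    obtain ⟨b, hb⟩ := Infinite.exists_notMem_finset s.toFinset
    rw [List.mem_toFinset] at hb
    refine ⟨b, hb, ?_⟩
    rw [← mapAtoms_update hinj]
    refine ih ((injOn_update hinj hmap hb).mono (by simp)) (fun x hx => ?_) fun l => ?_
    · split
      · simp
      · simp [hmap x (by simp [hx])]
    · rw [List.append_assoc]
      exact hS _

/-- Only values α-equivalent to a ground value pass its test. The second conjunct lets the
tests of the two components of a pair be run in sequence. -/
theorem test_sound {v u : Tm σ} {ar : Ty σ.D} (hv : Ground v) (hu : Ground u)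
    (hvt : HasTy σ [] v ar) (hut : HasTy σ [] u ar) (hinj : Set.InjOn f v.atoms)
    (hmap : ∀ x ∈ v.atoms, f x ∈ s) (hus : ∀ x ∈ u.atoms, x ∈ s)
    (h : Term σ ⟨s, S, testC v f u⟩) :
    AlphaEq σ s.toFinset (v.mapAtoms f) u ar ∧ ∃ l, Term σ ⟨s ++ l, S, .unit⟩ := by
  induction hv generalizing f s S u ar with
  | unit =>
    cases hvt
    cases hu <;> cases hut
    exact ⟨.unit, [], by simpa [testC, test] using h⟩
  | pair h₁ h₂ ih₁ ih₂ =>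
    cases hvt with
    | pair _ _ t₁ t₂ =>
      cases hu with
      | pair hu₁ hu₂ =>
        cases hut with
        | pair _ _ ut₁ ut₂ =>
          simp only [Tm.atoms, Finset.coe_union, Finset.mem_union] at hinj hmap hus
          rw [term_testC_pair h₁ hu₁ hu₂] at h
          obtain ⟨α₁, l, h⟩ := ih₁ hu₁ t₁ ut₁ (hinj.mono Set.subset_union_left)
            (fun x hx => hmap x (.inl hx)) (fun x hx => hus x (.inl hx)) h
          rw [term_testC_pair' h₂ hu₁ hu₂] at h
          -- The second component is tested in the state reached by the first test, but
          -- α-equivalence is needed in the initial world.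
          obtain ⟨α₂, l', h⟩ := ih₂ hu₂ t₂ ut₂ (hinj.mono Set.subset_union_right)
            (fun x hx => by simp [hmap x (.inr hx)]) (fun x hx => by simp [hus x (.inr hx)]) h
          refine ⟨.pair α₁ (α₂.strengthen (by simp) ?_ ?_), l ++ l', ?_⟩
          · rw [atoms_mapAtoms]
            intro x hx
            obtain ⟨y, hy, rfl⟩ := Finset.mem_image.1 hx
            exact List.mem_toFinset.2 (hmap y (.inr hy))
          · exact fun x hx => List.mem_toFinset.2 (hus x (.inr hx))
          · rwa [← List.append_assoc]
      | _ => cases hut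
  | @con v c hv ih =>
    cases hvt with
    | con _ t =>
      generalize hτ : Ty.data (σ.resTy c) = τ at hut
      cases hu with
      | con hu =>
        rw [term_testC_con hv hu] at h
        obtain ⟨rfl, h⟩ := h
        cases hut with
        | con _ ut =>
          obtain ⟨α, hl⟩ := ih hu t ut hinj hmap hus h
          exact ⟨.con α, hl⟩
      | _ => cases hut; cases hτ
  | @atom a =>
    cases hvt
    cases hu with
    | @atom b =>
      have ha := hmap a (by simp [Tm.atoms])
      rw [term_testC_atom ha (hus b (by simp [Tm.atoms]))] at h
      obtain ⟨rfl, h⟩ := h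
      exact ⟨.atom (by simpa using ha), [], by simpa using h⟩
    | _ => cases hut
  | @bindv v a hv ih =>
    cases hvt with
    | bindv _ _ _ t =>
      cases hu with
      | @bindv u a' hu =>
        cases hut with
        | bindv _ _ _ ut =>
          have hat : ∀ (t : Tm σ) (a : Atom),
              (Tm.bindv (.atom a) t).atoms = insert a t.atoms := fun t a => by simp [Tm.atoms]
          rw [hat] at hinj hmap hus
          rw [term_testC_bindv hv hu] at h
          obtain ⟨b, hb, h⟩ := h
          have hus' : u.atoms ⊆ s.toFinset := fun x hx =>
            List.mem_toFinset.2 (hus x (by simp [hx]))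
          obtain ⟨α, l, h⟩ := ih (hu.mapAtoms _) t (hu.mapAtoms_hasTy _ ut)
            ((injOn_update hinj hmap hb).mono (by simp))
            (fun x hx => by
              split
              · simp
              · simp [hmap x (by simp [hx])])
            (fun x hx => by
              have := atoms_renameAtom_subset hus' a' b hx
              simpa [or_comm] using this) h
          rw [mapAtoms_update hinj, toFinset_append_singleton] at α
          refine ⟨.bindv _ _ b _ _ (by simpa using hb) ?_ α, b :: l, by simpa using h⟩
          rw [atoms_mapAtoms]
          simp only [Finset.insert_subset_iff, Finset.union_subset_iff, List.mem_toFinset]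
          refine ⟨hmap a (by simp), hus a' (by simp), fun x hx => ?_, hus'⟩
          obtain ⟨y, hy, rfl⟩ := Finset.mem_image.1 hx
          exact List.mem_toFinset.2 (hmap y (by simp [hy]))
      | _ => cases hut

end Testing

/-- Correctness of Representation. -/
theorem correctness_of_representation (σ : Sig)
    (hequiv : ObsEquivariant σ)
    (hnom : ∀ c : σ.C, NominalArity σ (σ.argTy c))
    (ar : Ty σ.D) (har : NominalArity σ ar)
    (w : Finset Atom) (v v' : Tm σ)
    (hv : IsVal v) (hv' : IsVal v')
    (hw : v.atoms ∪ v'.atoms ⊆ w)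
    (ht : HasTy σ [] v ar) (ht' : HasTy σ [] v' ar) :
    AlphaEq σ w v v' ar ↔ OpEq σ w v v' ar := by
  have gv := ground_of_hasTy hnom hv har ht
  have gv' := ground_of_hasTy hnom hv' har ht'
  refine ⟨fun h => h.opEq ht ht', fun ⟨_, _, _, h⟩ => ?_⟩
  obtain ⟨hw₁, hw₂⟩ := Finset.union_subset_iff.1 hw
  -- The frame that tests its argument against `v`, run in a state whose atoms are exactly `w`.
  have hTat : (testC v id (.var 0)).atoms ⊆ w :=
    test_atoms gv (fun a => .inr ⟨a, rfl⟩) (fun a ha => by simpa [Tm.atoms] using hw₁ ha)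
      (.var 0) (by simp [Tm.atoms])
  have hTty : HasTy σ [ar] (testC v id (.var 0)) .unit :=
    test_hasTy gv ht (fun a => .inr ⟨a, rfl⟩) (fun _ => .atom) (.var 0) (.var _ _ _ rfl)
  have key : ∀ u, Ground u → (Term σ ⟨w.toList, .cons .id (testC v id (.var 0)), u⟩ ↔
      Term σ ⟨w.toList, .id, testC v id u⟩) := fun u gu => by
    rw [term_pop gu.isVal, Tm.subst1, testC_subst gv id (.var 0)]
    rfl
  have hpass : Term σ ⟨w.toList, .id, testC v id (v.mapAtoms id)⟩ :=
    test_complete gv Function.injective_id.injOn (fun x hx => by simpa using hw₁ hx)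
      fun l => ⟨0, .val .unit⟩
  rw [mapAtoms_id, ← key v gv, h _ _ .unit w.nodup_toList
    (by simpa [Stk.atoms] using Finset.union_subset subset_rfl hTat) (.cons hTty .id), key v' gv'] at hpass
  have := (test_sound gv gv' ht ht' Function.injective_id.injOn
    (fun x hx => by simpa using hw₁ hx) (fun x hx => by simpa using hw₂ hx) hpass).1
  rwa [mapAtoms_id, Finset.toList_toFinset] at this
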